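/- Let m₁, m₂ be integers with m₁² + m₂² > 0, and let α, γ be real numbers such that α, γ, and γ − α are not integers. Write (x)₊ = max(0, x). Then there exists a polynomial P(t) of degree at most max(|m₁|, |m₂ − m₁|) − 1 such that for all real t: ( (1−α)_{m₁} t^{(m₂)₊} / (2−γ)_{m₂} ) · ₁F₁(α; γ; t) · ₁F₁(1−α+m₁; 2−γ+m₂; −t) − (1−γ)_{m₂} (γ−α)_{m₁−m₂} t^{(−m₂)₊} · ₁F₁(1−α; 2−γ; −t) · ₁F₁(α−m₁; γ−m₂; t) = P(t). -/

import Mathlib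

open Finset

/-- Pochhammer symbol `(a)ₙ = a(a+1)⋯(a+n-1)` for natural `n`. -/
noncomputable def poch (a : ℝ) (n : ℕ) : ℝ := Polynomial.eval a (ascPochhammer ℝ n)

/-- Pochhammer symbol `(a)ₖ` for integer `k`: for `k ≥ 0` the ascending product,
and `(a)₋ₖ = (-1)ᵏ/(1-a)ₖ` for `k ≥ 0`. -/
noncomputable def pochZ (a : ℝ) (k : ℤ) : ℝ :=
  if 0 ≤ k then poch a k.toNat else (-1) ^ (-k).toNat / poch (1 - a) (-k).toNat

/-- The (generally non-terminating) Clausen series `₃F₂(a,b,c;d,e;1)`. -/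
noncomputable def F32 (a b c d e : ℝ) : ℝ :=
  ∑' n : ℕ, poch a n * poch b n * poch c n / (poch d n * poch e n * n.factorial)

/-- A terminating `₃F₂(a,b,c;d,e;1)` summed over `k = 0, …, N`. -/
noncomputable def F32sum (N : ℕ) (a b c d e : ℝ) : ℝ :=
  ∑ k ∈ Finset.range (N + 1),
    poch a k * poch b k * poch c k / (poch d k * poch e k * k.factorial)

/-- The Kummer confluent hypergeometric function `₁F₁(a;b;x)`. -/
noncomputable def F11 (a b x : ℝ) : ℝ :=
  ∑' n : ℕ, poch a n * x ^ n / (poch b n * n.factorial)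

/-!
Expand both products in powers of `t`. The coefficients of a product
`₁F₁(1 - A; 1 - B; t) · ₁F₁(A + p; B + q; -t)` are, up to a constant, finite differences at `0` of
the ratio `z ↦ (A - z)_{n+p} / (B - z)_{n+q}`. Kummer's transformation
`₁F₁(a; b; t) = eᵗ ₁F₁(b - a; b; -t)` brings the second product of the theorem to this form as well.
The `N`-th coefficients of the two terms are then, up to sign, the sums of the residues of a single
rational function at its two families of poles `0, …, n` and `1 - γ, …, 1 - γ + n'`. As soon as
`N ≥ |m₁|` and `N ≥ |m₂ - m₁|` this function is `O(z⁻²)` at infinity, so all its residues add up to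
`0` and the coefficients cancel. (When `N < |m₂|` one family is empty, one of the coefficients is
absent, and the other vanishes as a high-order difference of a polynomial.)
-/

open PowerSeries (coeff evalNegHom)
open scoped PowerSeries Polynomial Nat fwdDiff

section Pochhammer

/-- `a` is not an integer, so that no integer-indexed Pochhammer symbol based at an integer
translate of `a` vanishes or has a pole. -/
def NonInteger (a : ℝ) : Prop := ∀ k : ℤ, a ≠ k

namespace NonInteger

variable {a : ℝ}

lemma add_intCast (h : NonInteger a) (m : ℤ) : NonInteger (a + m) := fun k hk =>
  h (k - m) (by push_cast; linarith)

lemma intCast_sub (h : NonInteger a) (m : ℤ) : NonInteger (m - a) := fun k hk =>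
  h (m - k) (by push_cast; linarith)

lemma sub_natCast (h : NonInteger a) (n : ℕ) : NonInteger (a - n) := by
  simpa [sub_eq_add_neg] using h.add_intCast (-n)

lemma one_sub (h : NonInteger a) : NonInteger (1 - a) := by
  simpa using h.intCast_sub 1

lemma neg (h : NonInteger a) : NonInteger (-a) := by
  simpa using h.intCast_sub 0

lemma ne_neg_natCast (h : NonInteger a) (n : ℕ) : a ≠ -n := by
  simpa using h (-n)

lemma gamma_ne_zero (h : NonInteger a) : Real.Gamma a ≠ 0 :=
  Real.Gamma_ne_zero h.ne_neg_natCast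

end NonInteger

lemma poch_zero (a : ℝ) : poch a 0 = 1 := by simp [poch]

lemma poch_succ (a : ℝ) (n : ℕ) : poch a (n + 1) = poch a n * (a + n) :=
  ascPochhammer_succ_eval n a

lemma poch_ne_zero {a : ℝ} (h : ∀ n : ℕ, a ≠ -n) (n : ℕ) : poch a n ≠ 0 := by
  rw [poch, Ne, ascPochhammer_eval_eq_zero_iff]
  rintro ⟨k, -, hk⟩
  exact h k (by linarith)

lemma poch_eq_prod (a : ℝ) (n : ℕ) : poch a n = ∏ i ∈ range n, (a + i) := by
  induction n with
  | zero => simp [poch_zero]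
  | succ n ih => rw [poch_succ, prod_range_succ, ih]

lemma poch_add (a : ℝ) (m n : ℕ) : poch a (m + n) = poch a m * poch (a + m) n := by
  simp [poch, ← ascPochhammer_mul, Polynomial.eval_comp]

lemma poch_sub_natCast (a : ℝ) (n : ℕ) : poch (a - n) n = (-1) ^ n * poch (1 - a) n := by
  have h := ascPochhammer_eval_neg_eq_descPochhammer ℝ (a - 1) n
  rw [descPochhammer_eval_eq_ascPochhammer, neg_sub, sub_right_comm, sub_add_cancel] at h
  rw [poch, poch, h, ← mul_assoc, ← mul_pow]
  simp

lemma poch_mul_gamma {a : ℝ} (h : ∀ n : ℕ, a ≠ -n) (n : ℕ) :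
    poch a n * Real.Gamma a = Real.Gamma (a + n) := by
  induction n with
  | zero => simp [poch_zero]
  | succ n ih =>
    have han : a + n ≠ 0 := fun h0 => h n (by linarith)
    rw [poch_succ, mul_right_comm, ih, Nat.cast_succ, ← add_assoc, Real.Gamma_add_one han, mul_comm]

lemma pochZ_natCast (a : ℝ) (n : ℕ) : pochZ a n = poch a n := by simp [pochZ]

lemma pochZ_neg_natCast (a : ℝ) (n : ℕ) : pochZ a (-n) = (-1) ^ n / poch (1 - a) n := by
  obtain rfl | hn := n.eq_zero_or_pos
  · simp [pochZ, poch_zero]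
  · rw [pochZ, if_neg (by omega), neg_neg, Int.toNat_natCast]

lemma pochZ_eq_gamma_div {a : ℝ} (h : NonInteger a) (k : ℤ) :
    pochZ a k = Real.Gamma (a + k) / Real.Gamma a := by
  rw [eq_div_iff h.gamma_ne_zero]
  obtain ⟨n, rfl | rfl⟩ := k.eq_nat_or_neg
  · simpa [pochZ_natCast] using poch_mul_gamma h.ne_neg_natCast n
  · have hshift := poch_mul_gamma (h.sub_natCast n).ne_neg_natCast n
    rw [sub_add_cancel, poch_sub_natCast] at hshift
    have hpoch := poch_ne_zero h.one_sub.ne_neg_natCast n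
    rw [pochZ_neg_natCast, ← hshift, div_mul_eq_mul_div, div_eq_iff hpoch, ← mul_assoc,
      ← mul_assoc, ← mul_pow]
    push_cast
    simp [← sub_eq_add_neg, mul_comm]

lemma pochZ_ne_zero {a : ℝ} (h : NonInteger a) (k : ℤ) : pochZ a k ≠ 0 := by
  rw [pochZ_eq_gamma_div h]
  exact div_ne_zero (h.add_intCast k).gamma_ne_zero h.gamma_ne_zero

lemma pochZ_add {a : ℝ} (h : NonInteger a) (m n : ℤ) :
    pochZ a (m + n) = pochZ a m * pochZ (a + m) n := by
  rw [pochZ_eq_gamma_div h, pochZ_eq_gamma_div h, pochZ_eq_gamma_div (h.add_intCast m), mul_comm,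
    div_mul_div_cancel₀ (h.add_intCast m).gamma_ne_zero, Int.cast_add, add_assoc]

lemma pochZ_one_add {a : ℝ} (h : NonInteger a) (m : ℤ) :
    pochZ a (1 + m) = a * pochZ (a + 1) m := by
  rw [pochZ_add h, ← Nat.cast_one, pochZ_natCast]
  simp [poch]

lemma pochZ_mul_pochZ_one_sub_neg {a : ℝ} (h : NonInteger a) (m : ℤ) :
    pochZ a m * pochZ (1 - a) (-m) = (-1) ^ m := by
  obtain ⟨n, rfl | rfl⟩ := m.eq_nat_or_neg
  · rw [pochZ_natCast, pochZ_neg_natCast, sub_sub_cancel, zpow_natCast,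
      mul_div_cancel₀ _ (poch_ne_zero h.ne_neg_natCast n)]
  · rw [neg_neg, pochZ_natCast, pochZ_neg_natCast, zpow_neg, zpow_natCast, ← inv_pow, inv_neg_one,
      div_mul_cancel₀ _ (poch_ne_zero h.one_sub.ne_neg_natCast n)]

lemma pochZ_sub_natCast {a : ℝ} (h : NonInteger a) (k l : ℕ) (m : ℤ) :
    pochZ (a - k) (k + (m + l)) =
      (-1) ^ k * poch (1 - a) k * pochZ a m * poch (a + m) l := by
  rw [pochZ_add (h.sub_natCast k), pochZ_natCast, poch_sub_natCast, Int.cast_natCast,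
    sub_add_cancel, pochZ_add h, pochZ_natCast, ← mul_assoc]

lemma eval_ascPochhammer_comp (n : ℕ) (q : ℝ[X]) (z : ℝ) :
    ((ascPochhammer ℝ n).comp q).eval z = poch (q.eval z) n :=
  Polynomial.eval_comp

lemma natDegree_ascPochhammer_comp_le (n : ℕ) {q : ℝ[X]} (hq : q.natDegree ≤ 1) :
    ((ascPochhammer ℝ n).comp q).natDegree ≤ n := by
  rw [Polynomial.natDegree_comp, ascPochhammer_natDegree]
  exact mul_le_of_le_one_right n.zero_le hq

end Pochhammer

section FiniteDifferences

lemma fwdDiff_iter_zero_div_factorial {K : Type*} [Field K] [CharZero K] (f : K → K) (n : ℕ) :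
    Δ_[1] ^[n] f 0 / n ! =
      ∑ kl ∈ antidiagonal n, (-1) ^ kl.2 * f kl.1 / ((kl.1)! * (kl.2)!) := by
  rw [fwdDiff_iter_eq_sum_shift, Nat.sum_antidiagonal_eq_sum_range_succ
    (fun k l => (-1 : K) ^ l * f k / ((k)! * (l)!)), sum_div]
  refine sum_congr rfl fun k hk => ?_
  have hkn : k ≤ n := mem_range_succ_iff.mp hk
  have hn := Nat.cast_ne_zero (R := K).mpr n.factorial_ne_zero
  rw [zsmul_eq_mul, zero_add, nsmul_one]
  push_cast
  rw [Nat.cast_choose K hkn]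
  field_simp

lemma prod_erase_range_natCast_sub {R : Type*} [CommRing R] (k l : ℕ) :
    ∏ i ∈ (range (k + l + 1)).erase k, ((k : R) - i) = (-1) ^ l * (k ! * l !) := by
  induction l with
  | zero =>
    have hrange : (range (k + 0 + 1)).erase k = range k := by
      ext i; simp only [mem_erase, mem_range]; omega
    rw [hrange, ← prod_range_reflect, ← prod_range_add_one_eq_factorial]
    push_cast
    simp only [pow_zero, Nat.factorial_zero, Nat.cast_one, one_mul, mul_one]
    refine prod_congr rfl fun i hi => ?_
    rw [Nat.sub_sub, add_comm 1 i, Nat.cast_sub (mem_range.mp hi)]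
    push_cast
    ring
  | succ l ih =>
    have hrange : (range (k + (l + 1) + 1)).erase k =
        insert (k + l + 1) ((range (k + l + 1)).erase k) := by
      ext i; simp only [mem_erase, mem_range, mem_insert]; omega
    rw [hrange, prod_insert (by simp), ih, Nat.factorial_succ]
    push_cast
    ring

lemma div_neg_one_pow_mul {K : Type*} [Field K] (a b : K) (n : ℕ) :
    a / ((-1) ^ n * b) = (-1) ^ n * (a / b) := by
  obtain h | h := neg_one_pow_eq_or K n <;> simp [h, div_neg]

lemma fwdDiff_iter_zero_div_factorial_eq_sum_div_prod {K : Type*} [Field K] [CharZero K]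
    (f : K → K) (n : ℕ) :
    Δ_[1] ^[n] f 0 / n ! =
      ∑ k ∈ range (n + 1), f k / ∏ i ∈ (range (n + 1)).erase k, ((k : K) - i) := by
  rw [fwdDiff_iter_zero_div_factorial, Nat.sum_antidiagonal_eq_sum_range_succ
    (fun k l => (-1 : K) ^ l * f k / ((k)! * (l)!))]
  refine sum_congr rfl fun k hk => ?_
  obtain ⟨l, rfl⟩ := Nat.exists_eq_add_of_le (mem_range_succ_iff.mp hk)
  rw [prod_erase_range_natCast_sub, Nat.add_sub_cancel_left, div_neg_one_pow_mul, mul_div_assoc]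

lemma sum_eval_div_prod_sub_add_sum_eval_div_prod_sub {F ι κ : Type*} [Field F] [DecidableEq ι]
    [DecidableEq κ] {s : Finset ι} {t : Finset κ} {x : ι → F} {y : κ → F}
    (hx : Set.InjOn x s) (hy : Set.InjOn y t) (hxy : ∀ i ∈ s, ∀ j ∈ t, x i ≠ y j) {P : F[X]}
    (hP : P.natDegree + 2 ≤ #s + #t) :
    ∑ i ∈ s, P.eval (x i) / ((∏ k ∈ s.erase i, (x i - x k)) * ∏ j ∈ t, (x i - y j)) +
      ∑ j ∈ t, P.eval (y j) / ((∏ i ∈ s, (y j - x i)) * ∏ k ∈ t.erase j, (y j - y k)) = 0 := by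
  have hinj : Set.InjOn (Sum.elim x y) (s.disjSum t) := by
    rintro (i | i) hi (j | j) hj h <;>
      simp only [mem_coe, inl_mem_disjSum, inr_mem_disjSum, Sum.elim_inl, Sum.elim_inr] at hi hj h
    · rw [hx hi hj h]
    · exact absurd h (hxy i hi j hj)
    · exact absurd h.symm (hxy j hj i hi)
    · rw [hy hi hj h]
  have hdeg : P.natDegree + 1 < #(s.disjSum t) := by rw [card_disjSum]; omega
  have hsum := Lagrange.coeff_eq_sum hinj
    (P.degree_le_natDegree.trans_lt (Nat.cast_lt.mpr (by omega)))
  have erase_inl (i : ι) : (s.disjSum t).erase (Sum.inl i) = (s.erase i).disjSum t := by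
    ext (k | k) <;> simp
  have erase_inr (j : κ) : (s.disjSum t).erase (Sum.inr j) = s.disjSum (t.erase j) := by
    ext (k | k) <;> simp
  rw [P.coeff_eq_zero_of_natDegree_lt (by omega), sum_disjSum] at hsum
  simpa only [erase_inl, erase_inr, prod_disjSum, Sum.elim_inl, Sum.elim_inr] using hsum.symm

lemma prod_range_sub_add (z c : ℝ) (n : ℕ) :
    ∏ j ∈ range n, (z - (c + j)) = (-1) ^ n * poch (c - z) n := by
  rw [poch_eq_prod, ← card_range n, ← prod_const, card_range, ← prod_mul_distrib]
  exact prod_congr rfl fun j _ => by ring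

lemma neg_one_pow_mul_fwdDiff_add_neg_one_pow_mul_fwdDiff_eq_zero {c : ℝ} (hc : NonInteger c)
    {P : ℝ[X]} {n n' : ℕ} (hP : P.natDegree ≤ n + n') :
    (-1) ^ n' * (Δ_[1] ^[n] (fun z => P.eval z / poch (c - z) (n' + 1)) 0 / n !) +
      (-1) ^ n * (Δ_[1] ^[n'] (fun z => P.eval (c + z) / poch (-c - z) (n + 1)) 0 / (n')!) =
        0 := by
  have hxy : ∀ k ∈ range (n + 1), ∀ j ∈ range (n' + 1), (k : ℝ) ≠ c + j := fun k _ j _ h =>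
    hc (k - j) (by push_cast; linarith)
  have hsum := sum_eval_div_prod_sub_add_sum_eval_div_prod_sub (s := range (n + 1))
    (t := range (n' + 1)) (x := fun k : ℕ => (k : ℝ)) (y := fun j : ℕ => c + j)
    (Nat.cast_injective.injOn) (fun i _ j _ h => by simpa using h) hxy (P := P)
    (by rw [card_range, card_range]; omega)
  have hprod (j : ℕ) : ∏ k ∈ range (n + 1), (c + j - k) =
      (-1) ^ (n + 1) * poch (-c - j) (n + 1) := by
    simpa [sub_eq_add_neg, add_comm] using prod_range_sub_add (c + j) 0 (n + 1)
  simp only [add_sub_add_left_eq_sub, prod_range_sub_add, hprod] at hsum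
  rw [fwdDiff_iter_zero_div_factorial_eq_sum_div_prod,
    fwdDiff_iter_zero_div_factorial_eq_sum_div_prod, mul_sum, mul_sum, ← neg_eq_zero, ← hsum,
    neg_add, ← sum_neg_distrib, ← sum_neg_distrib]
  congr 1 <;> refine sum_congr rfl fun k _ => ?_
  · rw [mul_left_comm, div_neg_one_pow_mul, pow_succ, mul_comm (∏ _ ∈ _, _), div_div]
    ring
  · rw [mul_assoc, div_neg_one_pow_mul, pow_succ, div_div]
    ring

end FiniteDifferences

section KummerSeries

/-- The Kummer series `₁F₁(a; b; X)` as a formal power series. Its coefficients are meaningful when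
`b` is not a nonpositive integer; otherwise division by zero makes them vanish eventually. -/
noncomputable def kummerSeries (a b : ℝ) : ℝ⟦X⟧ :=
  PowerSeries.mk fun n => poch a n / (poch b n * n !)

lemma coeff_kummerSeries (a b : ℝ) (n : ℕ) :
    coeff n (kummerSeries a b) = poch a n / (poch b n * n !) :=
  PowerSeries.coeff_mk _ _

lemma coeff_evalNegHom {R : Type*} [CommRing R] (f : R⟦X⟧) (n : ℕ) :
    coeff n (evalNegHom f) = (-1) ^ n * coeff n f :=
  PowerSeries.coeff_rescale _ _ _

lemma ringChoose_eq_poch_div (r : ℝ) (n : ℕ) : Ring.choose r n = poch (r - n + 1) n / n ! := by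
  rw [Ring.choose_eq_smul, Polynomial.descPochhammer_smeval_eq_ascPochhammer,
    Polynomial.ascPochhammer_smeval_eq_eval, poch, smul_eq_mul, inv_mul_eq_div]

lemma ringChoose_neg_eq_poch_div (a : ℝ) (n : ℕ) :
    Ring.choose (-a) n = (-1) ^ n * poch a n / n ! := by
  have h := poch_sub_natCast (1 - a) n
  rw [sub_sub_cancel] at h
  rw [ringChoose_eq_poch_div, ← h]
  ring_nf

lemma sum_antidiagonal_neg_one_pow_mul_poch {a b : ℝ} (hb : ∀ n : ℕ, b ≠ -n) (n : ℕ) :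
    ∑ kl ∈ antidiagonal n,
        1 / (kl.1)! * ((-1) ^ kl.2 * (poch (b - a) kl.2 / (poch b kl.2 * (kl.2)!))) =
      poch a n / (poch b n * n !) := by
  have chu_vandermonde := Ring.add_choose_eq n (Commute.all (b + n - 1) (-(b - a)))
  have hsum : b + n - 1 + -(b - a) - n + 1 = a := by ring
  rw [ringChoose_eq_poch_div, hsum] at chu_vandermonde
  rw [div_mul_eq_div_div_swap, chu_vandermonde, sum_div]
  refine sum_congr rfl fun ⟨k, l⟩ hkl => ?_
  obtain rfl := mem_antidiagonal.mp hkl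
  have hbase : b + (k + l : ℕ) - 1 - k + 1 = b + l := by push_cast; ring
  have hl := poch_ne_zero hb l
  have hbl : poch (b + l) k ≠ 0 :=
    poch_ne_zero (fun j hj => hb (l + j) (by push_cast; linarith)) k
  rw [ringChoose_neg_eq_poch_div, ringChoose_eq_poch_div, hbase, add_comm k l, poch_add]
  field_simp

lemma kummerSeries_eq_exp_mul {a b : ℝ} (hb : ∀ n : ℕ, b ≠ -n) :
    kummerSeries a b =
      PowerSeries.exp ℝ * evalNegHom (kummerSeries (b - a) b) := by
  ext n
  simp only [PowerSeries.coeff_mul, coeff_evalNegHom, coeff_kummerSeries, PowerSeries.coeff_exp,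
    map_div₀, map_one, map_natCast]
  exact (sum_antidiagonal_neg_one_pow_mul_poch hb n).symm

lemma evalNegHom_evalNegHom {R : Type*} [CommRing R] (f : R⟦X⟧) :
    evalNegHom (evalNegHom f) = f := by
  ext n
  rw [coeff_evalNegHom, coeff_evalNegHom, ← mul_assoc, ← mul_pow]
  simp

lemma evalNegHom_kummerSeries_mul {a b c d : ℝ} (hb : ∀ n : ℕ, b ≠ -n) (hd : ∀ n : ℕ, d ≠ -n) :
    evalNegHom (kummerSeries a b) * kummerSeries c d =
      kummerSeries (b - a) b * evalNegHom (kummerSeries (d - c) d) := by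
  rw [kummerSeries_eq_exp_mul (a := a) hb, kummerSeries_eq_exp_mul (a := c) hd, map_mul,
    evalNegHom_evalNegHom]
  linear_combination kummerSeries (b - a) b * evalNegHom (kummerSeries (d - c) d) *
    PowerSeries.exp_mul_exp_neg_eq_one (A := ℝ)

/-- The product `₁F₁(1 - A; 1 - B; X) · ₁F₁(A + p; B + q; -X)`, in the parametrization that makes
its coefficients finite differences of ratios of Pochhammer symbols. -/
noncomputable def kummerProduct (A B : ℝ) (p q : ℤ) : ℝ⟦X⟧ :=
  kummerSeries (1 - A) (1 - B) * evalNegHom (kummerSeries (A + p) (B + q))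

lemma coeff_kummerProduct {A B : ℝ} (hA : NonInteger A) (hB : NonInteger B) (p q : ℤ) (n : ℕ) :
    coeff n (kummerProduct A B p q) =
      pochZ B q / pochZ A p *
        (Δ_[1] ^[n] (fun z => pochZ (A - z) (n + p) / pochZ (B - z) (n + q)) 0 / n !) := by
  rw [kummerProduct, PowerSeries.coeff_mul, fwdDiff_iter_zero_div_factorial, mul_sum]
  refine sum_congr rfl fun ⟨k, l⟩ hkl => ?_
  obtain rfl := mem_antidiagonal.mp hkl
  have hindex (m : ℤ) : ((k + l : ℕ) : ℤ) + m = k + (m + l) := by push_cast; ring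
  have hAp := pochZ_ne_zero hA p
  have hBq := pochZ_ne_zero hB q
  rw [coeff_evalNegHom, coeff_kummerSeries, coeff_kummerSeries, hindex, hindex,
    pochZ_sub_natCast hA, pochZ_sub_natCast hB]
  field_simp

lemma fwdDiff_iter_pochZ_div_pochZ_eq_zero (A B : ℝ) {p q : ℤ} {n : ℕ} (hp : 0 ≤ n + p)
    (hq : n + q ≤ 0) (hpq : p - q < n) :
    Δ_[1] ^[n] (fun z => pochZ (A - z) (n + p) / pochZ (B - z) (n + q)) = 0 := by
  obtain ⟨r, hr⟩ := Int.eq_ofNat_of_zero_le hp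
  obtain ⟨s, hs⟩ := Int.exists_eq_neg_ofNat hq
  let P : ℝ[X] := .C ((-1) ^ s) * ((ascPochhammer ℝ r).comp (.C A - .X) *
    (ascPochhammer ℝ s).comp (.C (1 - B) + .X))
  have hratio : (fun z => pochZ (A - z) (n + p) / pochZ (B - z) (n + q)) = P.eval := by
    ext z
    rw [hr, hs, pochZ_natCast, pochZ_neg_natCast]
    have hz : 1 - (B - z) = 1 - B + z := by ring
    simp only [P, Polynomial.eval_mul, Polynomial.eval_C, eval_ascPochhammer_comp,
      Polynomial.eval_add, Polynomial.eval_sub, Polynomial.eval_X]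
    rw [hz, div_div_eq_mul_div, ← mul_one ((-1) ^ s), div_neg_one_pow_mul, div_one, mul_one]
  have hdeg : P.natDegree < n := by
    have hle : P.natDegree ≤ r + s := (Polynomial.natDegree_C_mul_le _ _).trans
      (Polynomial.natDegree_mul_le_of_le (natDegree_ascPochhammer_comp_le r (by compute_degree))
        (natDegree_ascPochhammer_comp_le s (by compute_degree)))
    omega
  rw [hratio]
  exact Polynomial.fwdDiff_iter_eq_zero_of_degree_lt hdeg

lemma coeff_kummerProduct_eq_zero {A B : ℝ} (hA : NonInteger A) (hB : NonInteger B) {p q : ℤ}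
    {n : ℕ} (hp : 0 ≤ n + p) (hq : n + q ≤ 0) (hpq : p - q < n) :
    coeff n (kummerProduct A B p q) = 0 := by
  rw [coeff_kummerProduct hA hB, fwdDiff_iter_pochZ_div_pochZ_eq_zero A B hp hq hpq]
  simp

lemma fwdDiff_iter_pochZ_div_pochZ_reflect (A : ℝ) {B : ℝ} (hB : NonInteger B) {p m : ℤ}
    {n n' : ℕ} (hnn' : (n' : ℤ) = n + m) (hp : 0 ≤ n + p) (hpn' : p ≤ n') :
    Δ_[1] ^[n] (fun z => pochZ (A - z) (n + p) / pochZ (B - z) (n + (1 + m))) 0 / n ! =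
      -(-1) ^ m * (Δ_[1] ^[n'] (fun z => pochZ (A - B - z) (n' + (p - m)) /
        pochZ (-B - z) (n' + (1 - m))) 0 / (n')!) := by
  obtain ⟨r, hr⟩ := Int.eq_ofNat_of_zero_le hp
  have hdeg : ((ascPochhammer ℝ r).comp (.C A - .X)).natDegree ≤ n + n' :=
    (natDegree_ascPochhammer_comp_le r (by compute_degree)).trans (by omega)
  have hresidues := neg_one_pow_mul_fwdDiff_add_neg_one_pow_mul_fwdDiff_eq_zero hB hdeg
  have hden : (n : ℤ) + (1 + m) = (n' + 1 : ℕ) := by omega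
  have hnum' : (n' : ℤ) + (p - m) = r := by omega
  have hden' : (n' : ℤ) + (1 - m) = (n + 1 : ℕ) := by omega
  have hsign : (-1 : ℝ) ^ m = (-1) ^ n * (-1) ^ n' := by
    rw [eq_sub_iff_add_eq'.mpr hnn'.symm, zpow_sub₀ (by norm_num), zpow_natCast, zpow_natCast,
      div_eq_mul_inv, ← inv_pow, inv_neg_one, mul_comm]
  have hsq : (-1 : ℝ) ^ n' * (-1) ^ n' = 1 := by rw [← mul_pow]; simp
  simp only [hr, hden, hnum', hden', pochZ_natCast, hsign]
  simp only [eval_ascPochhammer_comp, Polynomial.eval_sub, Polynomial.eval_C, Polynomial.eval_X,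
    ← sub_sub] at hresidues
  linear_combination (-1) ^ n' * hresidues -
    Δ_[1] ^[n] (fun z => poch (A - z) r / poch (B - z) (n' + 1)) 0 / n ! * hsq

lemma pochZ_mul_coeff_kummerProduct {A B : ℝ} (hA : NonInteger A) (hB : NonInteger B)
    (hAB : NonInteger (A - B)) {p m : ℤ} {n n' : ℕ} (hnn' : (n' : ℤ) = n + m) (hp : 0 ≤ n + p)
    (hpn' : p ≤ n') :
    pochZ A p / pochZ (B + 1) m * coeff n (kummerProduct A B p (1 + m)) =
      pochZ B m * pochZ (A - B) (p - m) *
        coeff n' (kummerProduct (A - B) (-B) (p - m) (1 - m)) := by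
  have hB1 : NonInteger (B + 1) := by simpa using hB.add_intCast 1
  have hAp := pochZ_ne_zero hA p
  have hABp := pochZ_ne_zero hAB (p - m)
  have hB1m := pochZ_ne_zero hB1 m
  have hreflect := pochZ_mul_pochZ_one_sub_neg hB m
  rw [coeff_kummerProduct hA hB, coeff_kummerProduct hAB hB.neg,
    fwdDiff_iter_pochZ_div_pochZ_reflect A hB hnn' hp hpn', pochZ_one_add hB, sub_eq_add_neg 1 m,
    pochZ_one_add hB.neg, neg_add_eq_sub, ← hreflect]
  field_simp

/-- The power series expansion of the difference of the two products in the theorem, with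
`A = 1 - α`, `B = 1 - γ`, `p = m₁`, `m = m₂`, the second product being rewritten by Kummer's
transformation. -/
noncomputable def kummerDifference (A B : ℝ) (p m : ℤ) : ℝ⟦X⟧ :=
  PowerSeries.C (pochZ A p / pochZ (B + 1) m) *
      (PowerSeries.X ^ m.toNat * kummerProduct A B p (1 + m)) -
    PowerSeries.C (pochZ B m * pochZ (A - B) (p - m)) *
      (PowerSeries.X ^ (-m).toNat * kummerProduct (A - B) (-B) (p - m) (1 - m))

lemma coeff_kummerDifference_eq_zero {A B : ℝ} (hA : NonInteger A) (hB : NonInteger B)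
    (hAB : NonInteger (A - B)) {p m : ℤ} {N : ℕ} (hp : |p| ≤ N) (hmp : |m - p| ≤ N) :
    coeff N (kummerDifference A B p m) = 0 := by
  rw [abs_le] at hp hmp
  rw [kummerDifference, map_sub, PowerSeries.coeff_C_mul, PowerSeries.coeff_C_mul, sub_eq_zero,
    PowerSeries.coeff_X_pow_mul', PowerSeries.coeff_X_pow_mul']
  split_ifs with hm hm' hm'
  · exact pochZ_mul_coeff_kummerProduct hA hB hAB (by omega) (by omega) (by omega)
  · rw [coeff_kummerProduct_eq_zero hA hB (by omega) (by omega) (by omega), mul_zero, mul_zero]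
  · rw [coeff_kummerProduct_eq_zero hAB hB.neg (by omega) (by omega) (by omega), mul_zero, mul_zero]
  · omega

end KummerSeries

section EntireSum

variable {𝕜 : Type*} [NormedField 𝕜] {f g : 𝕜⟦X⟧} {F G : 𝕜 → 𝕜}

/-- The power series `f` converges absolutely at every point, with sum `F`. -/
def HasEntireSum (f : 𝕜⟦X⟧) (F : 𝕜 → 𝕜) : Prop :=
  ∀ x, Summable (fun n => ‖coeff n f * x ^ n‖) ∧ HasSum (fun n => coeff n f * x ^ n) (F x)

namespace HasEntireSum

lemma unique (hF : HasEntireSum f F) (hG : HasEntireSum f G) : F = G :=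
  funext fun x => (hF x).2.unique (hG x).2

lemma sub (hf : HasEntireSum f F) (hg : HasEntireSum g G) :
    HasEntireSum (f - g) (fun x => F x - G x) := fun x => by
  simp only [map_sub, sub_mul]
  exact ⟨.of_nonneg_of_le (fun _ => norm_nonneg _) (fun _ => norm_sub_le _ _)
    ((hf x).1.add (hg x).1), (hf x).2.sub (hg x).2⟩

lemma mul [CompleteSpace 𝕜] (hf : HasEntireSum f F) (hg : HasEntireSum g G) :
    HasEntireSum (f * g) (fun x => F x * G x) := fun x => by
  have hcoeff (n : ℕ) : coeff n (f * g) * x ^ n =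
      ∑ kl ∈ antidiagonal n, coeff kl.1 f * x ^ kl.1 * (coeff kl.2 g * x ^ kl.2) := by
    rw [PowerSeries.coeff_mul, sum_mul]
    refine sum_congr rfl fun kl hkl => ?_
    rw [← mem_antidiagonal.mp hkl]
    ring
  have hnorm := summable_norm_sum_mul_antidiagonal_of_summable_norm (hf x).1 (hg x).1
  have htsum := tsum_mul_tsum_eq_tsum_sum_antidiagonal_of_summable_norm (hf x).1 (hg x).1
  rw [(hf x).2.tsum_eq, (hg x).2.tsum_eq] at htsum
  simp only [hcoeff, htsum]
  exact ⟨hnorm, hnorm.of_norm.hasSum⟩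

lemma evalNegHom (hf : HasEntireSum f F) : HasEntireSum (evalNegHom f) (fun x => F (-x)) :=
  fun x => by
    have hcoeff (n : ℕ) : coeff n (PowerSeries.evalNegHom f) * x ^ n = coeff n f * (-x) ^ n := by
      rw [coeff_evalNegHom, neg_pow x]
      ring
    simpa only [hcoeff] using hf (-x)

end HasEntireSum

lemma hasEntireSum_coe (P : 𝕜[X]) : HasEntireSum (P : 𝕜⟦X⟧) P.eval := fun x => by
  have hzero (n : ℕ) (hn : n ∉ P.support) : coeff n (P : 𝕜⟦X⟧) * x ^ n = 0 := by
    rw [Polynomial.coeff_coe, Polynomial.notMem_support_iff.mp hn, zero_mul]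
  refine ⟨summable_of_ne_finset_zero (s := P.support) fun n hn => by rw [hzero n hn, norm_zero],
    ?_⟩
  simpa only [Polynomial.coeff_coe, Polynomial.eval_eq_sum, Polynomial.sum_def] using
    hasSum_sum_of_ne_finset_zero (L := .unconditional ℕ) hzero

lemma HasEntireSum.C_mul_X_pow_mul [CompleteSpace 𝕜] (hf : HasEntireSum f F) (c : 𝕜) (k : ℕ) :
    HasEntireSum (PowerSeries.C c * (PowerSeries.X ^ k * f)) (fun x => c * (x ^ k * F x)) := by
  simpa [mul_assoc] using (hasEntireSum_coe (.C c * .X ^ k)).mul hf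

lemma coeff_succ_kummerSeries_mul_pow (a b x : ℝ) (n : ℕ) :
    coeff (n + 1) (kummerSeries a b) * x ^ (n + 1) =
      (a + n) / (b + n) * (x / (n + 1)) * (coeff n (kummerSeries a b) * x ^ n) := by
  simp only [coeff_kummerSeries, poch_succ, Nat.factorial_succ, pow_succ, Nat.cast_mul,
    Nat.cast_succ, div_eq_mul_inv, mul_inv]
  ring

lemma tendsto_kummerSeries_ratio (a b x : ℝ) :
    Filter.Tendsto (fun n : ℕ => (a + n) / (b + n) * (x / (n + 1))) Filter.atTop (nhds 0) := by
  have hratio := tendsto_add_mul_div_add_mul_atTop_nhds a b 1 (one_ne_zero (α := ℝ))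
  have hx := (tendsto_const_div_atTop_nhds_zero_nat x).comp (Filter.tendsto_add_atTop_nat 1)
  simpa using hratio.mul hx

lemma hasEntireSum_kummerSeries (a b : ℝ) : HasEntireSum (kummerSeries a b) (F11 a b) := fun x => by
  have hsmall : ∀ᶠ n : ℕ in Filter.atTop, ‖(a + n) / (b + n) * (x / (n + 1))‖ ≤ 1 / 2 :=
    (tendsto_kummerSeries_ratio a b x).norm.eventually_le_const (by norm_num)
  have hsummable : Summable fun n => ‖coeff n (kummerSeries a b) * x ^ n‖ := by
    refine summable_of_ratio_norm_eventually_le (r := 1 / 2) (by norm_num) ?_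
    filter_upwards [hsmall] with n hn
    rw [norm_norm, norm_norm, coeff_succ_kummerSeries_mul_pow, norm_mul]
    gcongr
  refine ⟨hsummable, ?_⟩
  have hterm (n : ℕ) :
      poch a n * x ^ n / (poch b n * n !) = coeff n (kummerSeries a b) * x ^ n := by
    rw [coeff_kummerSeries, div_mul_eq_mul_div]
  simpa only [F11, hterm] using hsummable.of_norm.hasSum

lemma hasEntireSum_kummerProduct (A B : ℝ) (p q : ℤ) :
    HasEntireSum (kummerProduct A B p q)
      (fun x => F11 (1 - A) (1 - B) x * F11 (A + p) (B + q) (-x)) :=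
  (hasEntireSum_kummerSeries _ _).mul (hasEntireSum_kummerSeries _ _).evalNegHom

lemma hasEntireSum_kummerProduct_reflect (A : ℝ) {B : ℝ} (hB : NonInteger B) (p m : ℤ) :
    HasEntireSum (kummerProduct (A - B) (-B) (p - m) (1 - m))
      (fun x => F11 A (B + 1) (-x) * F11 (1 - A - p) (1 - B - m) x) := by
  have hb : NonInteger (B + 1) := by simpa using hB.add_intCast 1
  have hd : NonInteger (1 - B - m) := by
    simpa [sub_eq_add_neg] using hB.one_sub.add_intCast (-m)
  have hkummer := evalNegHom_kummerSeries_mul (a := A) (c := 1 - A - p) hb.ne_neg_natCast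
    hd.ne_neg_natCast
  have hproduct : kummerProduct (A - B) (-B) (p - m) (1 - m) =
      evalNegHom (kummerSeries A (B + 1)) * kummerSeries (1 - A - p) (1 - B - m) := by
    rw [hkummer, kummerProduct]
    push_cast
    ring_nf
  rw [hproduct]
  exact (hasEntireSum_kummerSeries _ _).evalNegHom.mul (hasEntireSum_kummerSeries _ _)

lemma hasEntireSum_kummerDifference (A : ℝ) {B : ℝ} (hB : NonInteger B) (p m : ℤ) :
    HasEntireSum (kummerDifference A B p m) (fun x =>
      pochZ A p / pochZ (B + 1) m *
          (x ^ m.toNat * (F11 (1 - A) (1 - B) x * F11 (A + p) (B + (1 + m : ℤ)) (-x))) -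
        pochZ B m * pochZ (A - B) (p - m) *
          (x ^ (-m).toNat * (F11 A (B + 1) (-x) * F11 (1 - A - p) (1 - B - m) x))) :=
  ((hasEntireSum_kummerProduct A B p (1 + m)).C_mul_X_pow_mul _ _).sub
    ((hasEntireSum_kummerProduct_reflect A hB p m).C_mul_X_pow_mul _ _)

end EntireSum

lemma exists_polynomial_coe_eq_of_coeff_eq_zero {R : Type*} [CommSemiring R] {f : R⟦X⟧} {D : ℕ}
    (hf : ∀ n ≥ D, coeff n f = 0) : ∃ P : R[X], P.natDegree ≤ D - 1 ∧ (P : R⟦X⟧) = f := by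
  refine ⟨f.trunc D, Polynomial.natDegree_le_iff_coeff_eq_zero.mpr fun n hn => ?_, ?_⟩
  · rw [PowerSeries.coeff_trunc, if_neg (by omega)]
  · ext n
    rw [Polynomial.coeff_coe, PowerSeries.coeff_trunc, ite_eq_left_iff]
    exact fun hn => (hf n (not_lt.mp hn)).symm

theorem Kummer_product_reduction (m₁ m₂ : ℤ) (hm : 0 < m₁ ^ 2 + m₂ ^ 2)
    (α γ : ℝ) (hα : ∀ k : ℤ, α ≠ (k : ℝ)) (hγ : ∀ k : ℤ, γ ≠ (k : ℝ))
    (hγα : ∀ k : ℤ, γ - α ≠ (k : ℝ)) :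
    ∃ P : Polynomial ℝ, P.natDegree ≤ (max |m₁| |m₂ - m₁| - 1).toNat ∧
      ∀ t : ℝ,
        pochZ (1 - α) m₁ * t ^ (max 0 m₂).toNat / pochZ (2 - γ) m₂ *
            F11 α γ t * F11 (1 - α + (m₁ : ℝ)) (2 - γ + (m₂ : ℝ)) (-t) -
          pochZ (1 - γ) m₂ * pochZ (γ - α) (m₁ - m₂) * t ^ (max 0 (-m₂)).toNat *
            F11 (1 - α) (2 - γ) (-t) * F11 (α - (m₁ : ℝ)) (γ - (m₂ : ℝ)) t =
        P.eval t := by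
  have hA : NonInteger (1 - α) := NonInteger.one_sub hα
  have hB : NonInteger (1 - γ) := NonInteger.one_sub hγ
  have hAB : NonInteger (1 - α - (1 - γ)) := by rwa [sub_sub_sub_cancel_left]
  obtain ⟨P, hdeg, hP⟩ := exists_polynomial_coe_eq_of_coeff_eq_zero
    (f := kummerDifference (1 - α) (1 - γ) m₁ m₂) (D := (max |m₁| |m₂ - m₁|).toNat)
    fun n hn => coeff_kummerDifference_eq_zero hA hB hAB (by omega) (by omega)
  refine ⟨P, by omega, fun t => ?_⟩
  have hsum := hasEntireSum_kummerDifference (1 - α) hB m₁ m₂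
  have heval := congrFun ((hP ▸ hsum).unique (hasEntireSum_coe P)) t
  have hpos : (max 0 m₂).toNat = m₂.toNat := by omega
  have hneg : (max 0 (-m₂)).toNat = (-m₂).toNat := by omega
  have hγ2 : 1 - γ + 1 = 2 - γ := by ring
  have hγ2m : 1 - γ + ((1 + m₂ : ℤ) : ℝ) = 2 - γ + m₂ := by push_cast; ring
  simp only [hγ2, hγ2m, sub_sub_sub_cancel_left, sub_sub_cancel] at heval
  rw [← heval, hpos, hneg]
  ring
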